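/- arXiv:1610.02781 — 3 statements merged into one kernel-verified Lean document; each statement's English description precedes it below -/
import Mathlib

section
/- Let E be a Bernoulli(λ) random variable with λ ∈ (0,1). Let X₀ be a {0,1}-valued random variable with P(X₀ = 1) = ω ∈ [0,1]; given X₀, let I be Bernoulli(μ_{X₀}) and let X₁ be obtained from X₀ by one step of the transition matrix P, with I and X₁ conditionally independent given X₀, and with E independent of (X₀, X₁, I). Then, whenever the conditioning events have positive probability, P(X₁ = 1 | E − I = 1) = τ_f(ω) and P(X₁ = 1 | E − I = −1) = τ_s(ω). -/
open MeasureTheory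

/-- Belief update after an observed service failure. -/
noncomputable def tauF (p q mu0 mu1 ω : ℝ) : ℝ :=
  ((1 - q) * (1 - mu1) * ω + p * (1 - mu0) * (1 - ω)) / (1 - ((1 - ω) * mu0 + ω * mu1))

/-- Belief update after an observed service success. -/
noncomputable def tauS (p q mu0 mu1 ω : ℝ) : ℝ :=
  ((1 - q) * mu1 * ω + p * mu0 * (1 - ω)) / ((1 - ω) * mu0 + ω * mu1)

/-!
Given `I`, the arrival `E` carries no information on `X₁`, so it drops out of the conditioning.
Splitting over the value of `X₀`, where `I` and `X₁` are conditionally independent, then gives the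
posterior as a ratio of mixtures. A failure is a success with probabilities `1 - μ₀` and `1 - μ₁`,
so `τ_s` covers both observations.
-/

theorem preimage_singleton_false {Ω : Type*} (Y : Ω → Bool) :
    Y ⁻¹' {false} = (Y ⁻¹' {true})ᶜ := by
  rw [← Set.preimage_compl, Bool.compl_singleton, Bool.not_true]

section ConditionalProbability

open ProbabilityTheory

variable {Ω : Type*} [MeasurableSpace Ω] {P : Measure Ω} {A B C : Set Ω} {m t : ℝ}

theorem cond_real_apply (hA : MeasurableSet A) (P : Measure Ω) (B : Set Ω) :
    P[|A].real B = P.real (A ∩ B) / P.real A := by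
  simp only [measureReal_def, cond_apply hA, ENNReal.toReal_mul, ENNReal.toReal_inv,
    inv_mul_eq_div]

theorem measureReal_compl_inter_eq_one_sub_mul [IsFiniteMeasure P] (hA : MeasurableSet A)
    (h : P.real (A ∩ C) = m * P.real C) : P.real (Aᶜ ∩ C) = (1 - m) * P.real C := by
  have hsplit := measureReal_inter_add_sdiff (μ := P) (s := C) hA
  rw [Set.sdiff_eq, Set.inter_comm C, Set.inter_comm C] at hsplit
  linarith

theorem measureReal_inter_inter_eq_mul_mul [IsFiniteMeasure P]
    (hCI : P.real (A ∩ B ∩ C) * P.real C = P.real (A ∩ C) * P.real (B ∩ C))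
    (hA : P.real (A ∩ C) = m * P.real C) (hB : P.real (B ∩ C) = t * P.real C) :
    P.real (A ∩ B ∩ C) = m * t * P.real C := by
  rcases eq_or_ne (P.real C) 0 with hC | hC
  · rw [hC, mul_zero]
    exact measureReal_mono_null Set.inter_subset_right hC
  · refine mul_right_cancel₀ hC ?_
    rw [hCI, hA, hB]
    ring

section FiniteState

variable {κ : Type*} [Fintype κ] [MeasurableSpace κ] [MeasurableSingletonClass κ] {X : Ω → κ}

theorem measureReal_eq_sum_inter_fiber [IsFiniteMeasure P] (hX : Measurable X) (A : Set Ω) :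
    P.real A = ∑ k, P.real (A ∩ X ⁻¹' {k}) := by
  have hfiber (k : κ) : MeasurableSet (X ⁻¹' {k}) := hX (.singleton k)
  have hsum := sum_measureReal_preimage_singleton (μ := P.restrict A) Finset.univ
    fun k _ ↦ hfiber k
  simpa [measureReal_restrict_apply, hfiber, Set.inter_comm] using hsum.symm

theorem cond_real_eq_sum_div_sum [IsFiniteMeasure P] (hX : Measurable X) (hA : MeasurableSet A)
    {m t : κ → ℝ}
    (hm : ∀ k, P.real (A ∩ X ⁻¹' {k}) = m k * P.real (X ⁻¹' {k}))
    (ht : ∀ k, P.real (B ∩ X ⁻¹' {k}) = t k * P.real (X ⁻¹' {k}))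
    (hCI : ∀ k, P.real (A ∩ B ∩ X ⁻¹' {k}) * P.real (X ⁻¹' {k})
      = P.real (A ∩ X ⁻¹' {k}) * P.real (B ∩ X ⁻¹' {k})) :
    P[|A].real B
      = (∑ k, m k * t k * P.real (X ⁻¹' {k})) / ∑ k, m k * P.real (X ⁻¹' {k}) := by
  rw [cond_real_apply hA, measureReal_eq_sum_inter_fiber hX (A ∩ B),
    measureReal_eq_sum_inter_fiber hX A]
  simp only [measureReal_inter_inter_eq_mul_mul (hCI _) (hm _) (ht _), hm]

end FiniteState

section Independence

variable {α β ε : Type*} [MeasurableSpace α] [MeasurableSpace β] [MeasurableSpace ε]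
  {E : Ω → ε} {X : Ω → α} {Y : Ω → β}

theorem indepFun_of_measureReal_singleton [IsFiniteMeasure P] [Countable ε] [Countable α]
    [MeasurableSingletonClass ε] [MeasurableSingletonClass α]
    (hE : Measurable E) (hX : Measurable X)
    (h : ∀ e x, P.real (E ⁻¹' {e} ∩ X ⁻¹' {x}) = P.real (E ⁻¹' {e}) * P.real (X ⁻¹' {x})) :
    IndepFun E X P := by
  rw [indepFun_iff_map_prod_eq_prod_map_map hE.aemeasurable hX.aemeasurable]
  refine Measure.ext_of_measureReal_singleton fun ⟨e, x⟩ ↦ ?_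
  rw [← Set.singleton_prod_singleton, measureReal_prod_prod,
    map_measureReal_apply hE (.singleton e), map_measureReal_apply hX (.singleton x),
    map_measureReal_apply (hE.prodMk hX) ((MeasurableSet.singleton e).prod (.singleton x)),
    Set.mk_preimage_prod, h]

theorem cond_real_inter_preimage_of_indepFun (hE : Measurable E) (hY : Measurable Y)
    (h : IndepFun E (fun a ↦ (X a, Y a)) P) {r : Set ε} {s : Set α} {u : Set β}
    (hr : MeasurableSet r) (hs : MeasurableSet s) (hu : MeasurableSet u)
    (h_ne : P.real (E ⁻¹' r) ≠ 0) :
    P[|E ⁻¹' r ∩ Y ⁻¹' u].real (X ⁻¹' s) = P[|Y ⁻¹' u].real (X ⁻¹' s) := by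
  have hEY : P.real (E ⁻¹' r ∩ Y ⁻¹' u) = P.real (E ⁻¹' r) * P.real (Y ⁻¹' u) := by
    have hindep : IndepFun E Y P := h.comp measurable_id measurable_snd
    simp only [measureReal_def, hindep.measure_inter_preimage_eq_mul r u hr hu,
      ENNReal.toReal_mul]
  have hEXY : P.real (E ⁻¹' r ∩ (X ⁻¹' s ∩ Y ⁻¹' u))
      = P.real (E ⁻¹' r) * P.real (X ⁻¹' s ∩ Y ⁻¹' u) := by
    rw [← Set.mk_preimage_prod]
    simp only [measureReal_def, h.measure_inter_preimage_eq_mul r (s ×ˢ u) hr (hs.prod hu),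
      ENNReal.toReal_mul]
  rw [cond_real_apply ((hE hr).inter (hY hu)), cond_real_apply (hY hu), Set.inter_assoc,
    Set.inter_comm (Y ⁻¹' u), hEXY, hEY, mul_div_mul_left _ _ h_ne]

end Independence

end ConditionalProbability

section BeliefUpdate

open ProbabilityTheory

variable {Ω : Type*} [MeasurableSpace Ω] {P : Measure Ω} {X0 : Ω → Bool} {p q m0 m1 : ℝ}

theorem tauF_eq_tauS_one_sub (p q mu0 mu1 ω : ℝ) :
    tauF p q mu0 mu1 ω = tauS p q (1 - mu0) (1 - mu1) ω := by
  unfold tauF tauS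
  congr 1
  ring

theorem cond_real_eq_tauS [IsProbabilityMeasure P] {A B : Set Ω}
    (hX0 : Measurable X0) (hA : MeasurableSet A)
    (hA0 : P.real (A ∩ X0 ⁻¹' {false}) = m0 * P.real (X0 ⁻¹' {false}))
    (hA1 : P.real (A ∩ X0 ⁻¹' {true}) = m1 * P.real (X0 ⁻¹' {true}))
    (hB0 : P.real (B ∩ X0 ⁻¹' {false}) = p * P.real (X0 ⁻¹' {false}))
    (hB1 : P.real (B ∩ X0 ⁻¹' {true}) = (1 - q) * P.real (X0 ⁻¹' {true}))
    (hCI : ∀ k, P.real (A ∩ B ∩ X0 ⁻¹' {k}) * P.real (X0 ⁻¹' {k})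
      = P.real (A ∩ X0 ⁻¹' {k}) * P.real (B ∩ X0 ⁻¹' {k})) :
    P[|A].real B = tauS p q m0 m1 (P.real (X0 ⁻¹' {true})) := by
  have hfalse : P.real (X0 ⁻¹' {false}) = 1 - P.real (X0 ⁻¹' {true}) := by
    rw [preimage_singleton_false, probReal_compl_eq_one_sub (hX0 (.singleton true))]
  rw [cond_real_eq_sum_div_sum hX0 hA (m := fun k ↦ bif k then m1 else m0)
    (t := fun k ↦ bif k then 1 - q else p) (Bool.forall_bool.2 ⟨hA0, hA1⟩)
    (Bool.forall_bool.2 ⟨hB0, hB1⟩) hCI]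
  simp only [Fintype.sum_bool, cond_true, cond_false, hfalse, tauS]
  congr 1 <;> ring

theorem measureReal_div_eq_tauS [IsProbabilityMeasure P] {α β ε : Type*} [MeasurableSpace α]
    [MeasurableSpace β] [MeasurableSpace ε] {E : Ω → ε} {X1 : Ω → α} {I : Ω → β}
    (hE : Measurable E) (hX0 : Measurable X0) (hI : Measurable I)
    (hindep : IndepFun E (fun a ↦ (X1 a, I a)) P)
    {r : Set ε} {s : Set α} {u : Set β}
    (hr : MeasurableSet r) (hs : MeasurableSet s) (hu : MeasurableSet u)
    (hm0 : P.real (I ⁻¹' u ∩ X0 ⁻¹' {false}) = m0 * P.real (X0 ⁻¹' {false}))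
    (hm1 : P.real (I ⁻¹' u ∩ X0 ⁻¹' {true}) = m1 * P.real (X0 ⁻¹' {true}))
    (hp : P.real (X1 ⁻¹' s ∩ X0 ⁻¹' {false}) = p * P.real (X0 ⁻¹' {false}))
    (hq : P.real (X1 ⁻¹' s ∩ X0 ⁻¹' {true}) = (1 - q) * P.real (X0 ⁻¹' {true}))
    (hCI : ∀ k, P.real (I ⁻¹' u ∩ (X1 ⁻¹' s ∩ X0 ⁻¹' {k})) * P.real (X0 ⁻¹' {k})
      = P.real (I ⁻¹' u ∩ X0 ⁻¹' {k}) * P.real (X1 ⁻¹' s ∩ X0 ⁻¹' {k}))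
    (hpos : 0 < P.real (E ⁻¹' r ∩ I ⁻¹' u)) :
    P.real (X1 ⁻¹' s ∩ (E ⁻¹' r ∩ I ⁻¹' u)) / P.real (E ⁻¹' r ∩ I ⁻¹' u)
      = tauS p q m0 m1 (P.real (X0 ⁻¹' {true})) := by
  have hr_pos : 0 < P.real (E ⁻¹' r) := hpos.trans_le (measureReal_mono Set.inter_subset_left)
  simp only [← Set.inter_assoc (I ⁻¹' u)] at hCI
  calc P.real (X1 ⁻¹' s ∩ (E ⁻¹' r ∩ I ⁻¹' u)) / P.real (E ⁻¹' r ∩ I ⁻¹' u)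
      = P[|E ⁻¹' r ∩ I ⁻¹' u].real (X1 ⁻¹' s) := by
        rw [cond_real_apply ((hE hr).inter (hI hu)), Set.inter_comm]
    _ = P[|I ⁻¹' u].real (X1 ⁻¹' s) :=
        cond_real_inter_preimage_of_indepFun hE hI hindep hr hs hu hr_pos.ne'
    _ = tauS p q m0 m1 (P.real (X0 ⁻¹' {true})) :=
        cond_real_eq_tauS hX0 (hI hu) hm0 hm1 hp hq hCI

end BeliefUpdate

/-- Queue observation: with `E ~ Bernoulli(λ)` independent of `(X₀, X₁, I)`, a queue increase
`E − I = 1` (i.e. `E = 1, I = 0`) yields belief `τ_f(ω)`, and a queue decrease `E − I = −1`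
(i.e. `E = 0, I = 1`) yields belief `τ_s(ω)`, whenever the conditioning events have
positive probability. -/
theorem belief_update_queue_observation
    (p q mu0 mu1 ω lam : ℝ)
    (hp : p ∈ Set.Icc (0 : ℝ) 1) (hq : q ∈ Set.Icc (0 : ℝ) 1)
    (hmu0 : mu0 ∈ Set.Icc (0 : ℝ) 1) (hmu1 : mu1 ∈ Set.Icc (0 : ℝ) 1)
    (hω : ω ∈ Set.Icc (0 : ℝ) 1) (hlam : lam ∈ Set.Ioo (0 : ℝ) 1)
    (Ω : Type*) [MeasurableSpace Ω] (P : Measure Ω) [IsProbabilityMeasure P]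
    (X0 X1 I E : Ω → Bool)
    (hX0 : Measurable X0) (hX1 : Measurable X1) (hI : Measurable I) (hE : Measurable E)
    -- E ~ Bernoulli(λ)
    (hArr : (P {a | E a = true}).toReal = lam)
    -- P(X₀ = 1) = ω
    (hInit : (P {a | X0 a = true}).toReal = ω)
    -- conditional law of I given X₀: I ~ Bernoulli(μ_{X₀})
    (hI0 : (P {a | I a = true ∧ X0 a = false}).toReal
            = mu0 * (P {a | X0 a = false}).toReal)
    (hI1 : (P {a | I a = true ∧ X0 a = true}).toReal
            = mu1 * (P {a | X0 a = true}).toReal)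
    -- transition of the chain: P(X₁=1 | X₀=0) = p, P(X₁=1 | X₀=1) = 1 − q
    (hT0 : (P {a | X1 a = true ∧ X0 a = false}).toReal
            = p * (P {a | X0 a = false}).toReal)
    (hT1 : (P {a | X1 a = true ∧ X0 a = true}).toReal
            = (1 - q) * (P {a | X0 a = true}).toReal)
    -- conditional independence of I and X₁ given X₀
    (hCI : ∀ i j k : Bool,
      (P {a | I a = i ∧ X1 a = j ∧ X0 a = k}).toReal * (P {a | X0 a = k}).toReal
        = (P {a | I a = i ∧ X0 a = k}).toReal * (P {a | X1 a = j ∧ X0 a = k}).toReal)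
    -- E is independent of (X₀, X₁, I)
    (hInd : ∀ e i j k : Bool,
      (P {a | E a = e ∧ X0 a = i ∧ X1 a = j ∧ I a = k}).toReal
        = (P {a | E a = e}).toReal * (P {a | X0 a = i ∧ X1 a = j ∧ I a = k}).toReal) :
    -- queue increase ⇒ belief τ_f(ω); queue decrease ⇒ belief τ_s(ω)
    (0 < (P {a | E a = true ∧ I a = false}).toReal →
      (P {a | X1 a = true ∧ E a = true ∧ I a = false}).toReal
        / (P {a | E a = true ∧ I a = false}).toReal = tauF p q mu0 mu1 ω) ∧
    (0 < (P {a | E a = false ∧ I a = true}).toReal →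
      (P {a | X1 a = true ∧ E a = false ∧ I a = true}).toReal
        / (P {a | E a = false ∧ I a = true}).toReal = tauS p q mu0 mu1 ω) := by
  have hindep : ProbabilityTheory.IndepFun E (fun a ↦ (X0 a, X1 a, I a)) P := by
    refine indepFun_of_measureReal_singleton hE (by fun_prop) fun e ⟨i, j, k⟩ ↦ ?_
    simpa only [Set.preimage, Set.mem_singleton_iff, Prod.mk.injEq] using! hInd e i j k
  have hindep_X1_I : ProbabilityTheory.IndepFun E (fun a ↦ (X1 a, I a)) P :=
    hindep.comp measurable_id measurable_snd
  have hfail {k : Bool} {m : ℝ}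
      (hm : P.real (I ⁻¹' {true} ∩ X0 ⁻¹' {k}) = m * P.real (X0 ⁻¹' {k})) :
      P.real (I ⁻¹' {false} ∩ X0 ⁻¹' {k}) = (1 - m) * P.real (X0 ⁻¹' {k}) := by
    rw [preimage_singleton_false]
    exact measureReal_compl_inter_eq_one_sub_mul (hI (.singleton true)) hm
  rw [tauF_eq_tauS_one_sub, ← hInit]
  exact ⟨measureReal_div_eq_tauS hE hX0 hI hindep_X1_I (.singleton true) (.singleton true)
      (.singleton false) (hfail hI0) (hfail hI1) hT0 hT1 (hCI false true),
    measureReal_div_eq_tauS hE hX0 hI hindep_X1_I (.singleton false) (.singleton true)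
      (.singleton true) hI0 hI1 hT0 hT1 (hCI true true)⟩
end

section
/- Suppose p, q ∈ (0,1), μ₀, μ₁ ∈ (0,1) with μ₀ ≠ μ₁, and ρ = 1−p−q ≠ 0. Set a = (1−q)(1−μ₁) − p(1−μ₀), b = p(1−μ₀), c = (1−μ₁) − (1−μ₀), d = 1−μ₀. Then the fixed-point equation τ_f(ω) = ω has two distinct real solutions (equivalently, (a−d)² + 4bc > 0 and c ≠ 0), and the solution ω* = (a − d + √((a−d)² + 4bc))/(2c) satisfies ω* ∈ (0,1). -/
/-!
The solutions of `(a * x + b) / (c * x + d) = x` are the roots of `c * x² + (d - a) * x - b`, unless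
such a root is the pole; there the numerator would vanish too, forcing the determinant
`a * d - b * c` to be zero, while for `τ_f` it is `(1 - p - q) * (1 - μ₀) * (1 - μ₁)`.

For `τ_f` the quadratic takes the values `-p * (1 - μ₀) < 0` at `0` and `q * (1 - μ₁) > 0` at `1`,
so it crosses zero upwards in between. Since `√D` is the slope of the quadratic at
`ω* = (a - d + √D) / (2 * c)`, whichever sign `c` has, the upward crossing is at `ω*`.
-/

section OrderedRing

variable {R : Type*} [CommRing R] [LinearOrder R] [IsStrictOrderedRing R]

lemma discrim_pos_of_neg_of_pos {a b c x y : R} (hx : a * (x * x) + b * x + c < 0)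
    (hy : 0 < a * (y * y) + b * y + c) : 0 < discrim a b c := by
  have complete_square (t : R) :
      discrim a b c = (2 * a * t + b) ^ 2 - 4 * a * (a * (t * t) + b * t + c) := by
    rw [discrim]
    ring
  rcases lt_trichotomy a 0 with ha | rfl | ha
  · have : a * (a * (y * y) + b * y + c) < 0 := mul_neg_of_neg_of_pos ha hy
    linarith [complete_square y, sq_nonneg (2 * a * y + b)]
  · have hb : b ≠ 0 := by
      rintro rfl
      linarith
    simpa [discrim] using sq_pos_of_ne_zero hb
  · have : a * (a * (x * x) + b * x + c) < 0 := mul_neg_of_pos_of_neg ha hx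
    linarith [complete_square x, sq_nonneg (2 * a * x + b)]

lemma neg_and_pos_of_mul_mul_add {a s u v : R} (hs : 0 < s) (huv : u < v)
    (hu : u * (a * u + s) < 0) (hv : 0 < v * (a * v + s)) : u < 0 ∧ 0 < v := by
  rcases mul_neg_iff.1 hu with ⟨hu0, hau⟩ | ⟨hu0, hau⟩
  · have ha : a < 0 := by
      by_contra! ha
      linarith [mul_nonneg ha hu0.le]
    have hav : a * v + s < 0 := by linarith [mul_lt_mul_of_neg_left huv ha]
    exact absurd hv (mul_neg_of_pos_of_neg (hu0.trans huv) hav).not_gt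
  · refine ⟨hu0, ?_⟩
    rcases mul_pos_iff.1 hv with ⟨hv0, -⟩ | ⟨hv0, hav⟩
    · exact hv0
    · have ha : 0 < a := pos_of_mul_neg_left (by linarith) hv0.le
      linarith [mul_lt_mul_of_pos_left huv ha]

end OrderedRing

lemma quadratic_root_mem_Ioo_of_neg_of_pos {K : Type*} [Field K] [LinearOrder K]
    [IsStrictOrderedRing K] {a b c s x y : K} (ha : a ≠ 0) (hs : 0 < s)
    (hD : discrim a b c = s * s) (hxy : x < y) (hx : a * (x * x) + b * x + c < 0)
    (hy : 0 < a * (y * y) + b * y + c) :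
    (-b + s) / (2 * a) ∈ Set.Ioo x y := by
  set r := (-b + s) / (2 * a) with hr
  have hroot : a * (r * r) + b * r + c = 0 := (quadratic_eq_zero_iff ha hD r).2 (.inl hr)
  have hslope : 2 * a * r + b = s := by
    rw [hr]
    field_simp
    ring
  have taylor (t : K) : a * (t * t) + b * t + c = (t - r) * (a * (t - r) + s) := by
    linear_combination hroot + (t - r) * hslope
  rw [taylor] at hx hy
  have ⟨hxr, hry⟩ := neg_and_pos_of_mul_mul_add hs (sub_lt_sub_right hxy r) hx hy
  exact ⟨sub_neg.1 hxr, sub_pos.1 hry⟩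

lemma discrim_mobius_fixed_point {R : Type*} [CommRing R] (a b c d : R) :
    discrim c (d - a) (-b) = (a - d) ^ 2 + 4 * b * c := by
  rw [discrim]
  ring

lemma mobius_discrim_pos {R : Type*} [CommRing R] [LinearOrder R] [IsStrictOrderedRing R]
    {a b c d : R} (hb : 0 < b) (hlt : a + b < c + d) : 0 < (a - d) ^ 2 + 4 * b * c := by
  have hneg : c * (0 * 0) + (d - a) * 0 + -b < 0 := by linarith
  have hpos : 0 < c * (1 * 1) + (d - a) * 1 + -b := by linarith
  rw [← discrim_mobius_fixed_point]
  exact discrim_pos_of_neg_of_pos hneg hpos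

section Mobius

variable {K : Type*} [Field K] {a b c d : K}

lemma mobius_eq_self_of_quadratic_eq_zero {x : K} (hdet : a * d - b * c ≠ 0)
    (hx : c * (x * x) + (d - a) * x + -b = 0) :
    (a * x + b) / (c * x + d) = x := by
  have hden : c * x + d ≠ 0 := by
    intro hzero
    have hnum : a * x + b = 0 := by linear_combination x * hzero - hx
    exact hdet (by linear_combination a * hzero - c * hnum)
  rw [div_eq_iff hden]
  linear_combination -hx

lemma mobius_eq_self_of_sq_eq [NeZero (2 : K)] {s : K} (hc : c ≠ 0) (hdet : a * d - b * c ≠ 0)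
    (hsq : s ^ 2 = (a - d) ^ 2 + 4 * b * c) :
    (a * ((a - d + s) / (2 * c)) + b) / (c * ((a - d + s) / (2 * c)) + d) =
      (a - d + s) / (2 * c) := by
  have hD : discrim c (d - a) (-b) = s * s := by rw [discrim_mobius_fixed_point, ← hsq, sq]
  refine mobius_eq_self_of_quadratic_eq_zero hdet ((quadratic_eq_zero_iff hc hD _).2 (.inl ?_))
  rw [neg_sub]

variable [LinearOrder K] [IsStrictOrderedRing K]

lemma mobius_root_mem_Ioo_zero_one {s : K} (hc : c ≠ 0) (hb : 0 < b) (hlt : a + b < c + d)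
    (hs : 0 < s) (hsq : s ^ 2 = (a - d) ^ 2 + 4 * b * c) :
    (a - d + s) / (2 * c) ∈ Set.Ioo 0 1 := by
  have hD : discrim c (d - a) (-b) = s * s := by rw [discrim_mobius_fixed_point, ← hsq, sq]
  rw [← neg_sub d a]
  exact quadratic_root_mem_Ioo_of_neg_of_pos hc hs hD one_pos (by linarith) (by linarith)

end Mobius

lemma tauF_eq_mobius (p q mu0 mu1 ω : ℝ) :
    tauF p q mu0 mu1 ω =
      (((1 - q) * (1 - mu1) - p * (1 - mu0)) * ω + p * (1 - mu0)) /
        (((1 - mu1) - (1 - mu0)) * ω + (1 - mu0)) := by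
  rw [tauF]
  congr 1 <;> ring

theorem tauF_fixed_points_general {p q mu0 mu1 : ℝ} (hp : 0 < p) (hq : 0 < q)
    (hmu0 : mu0 < 1) (hmu1 : mu1 < 1) (hmu : mu0 ≠ mu1) (hrho : 1 - p - q ≠ 0) {a b c d : ℝ}
    (ha : a = (1 - q) * (1 - mu1) - p * (1 - mu0)) (hb : b = p * (1 - mu0))
    (hc : c = (1 - mu1) - (1 - mu0)) (hd : d = 1 - mu0) :
    c ≠ 0 ∧ 0 < (a - d) ^ 2 + 4 * b * c ∧
    (∃ ω₁ ω₂ : ℝ, ω₁ ≠ ω₂ ∧ tauF p q mu0 mu1 ω₁ = ω₁ ∧ tauF p q mu0 mu1 ω₂ = ω₂) ∧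
    tauF p q mu0 mu1 ((a - d + Real.sqrt ((a - d) ^ 2 + 4 * b * c)) / (2 * c))
      = (a - d + Real.sqrt ((a - d) ^ 2 + 4 * b * c)) / (2 * c) ∧
    (a - d + Real.sqrt ((a - d) ^ 2 + 4 * b * c)) / (2 * c) ∈ Set.Ioo (0 : ℝ) 1 := by
  have hmu0' : 0 < 1 - mu0 := sub_pos.2 hmu0
  have hmu1' : 0 < 1 - mu1 := sub_pos.2 hmu1
  have hc0 : c ≠ 0 := by rwa [hc, sub_sub_sub_cancel_left, sub_ne_zero]
  have hdet : a * d - b * c ≠ 0 := by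
    rw [show a * d - b * c = (1 - p - q) * (1 - mu0) * (1 - mu1) by rw [ha, hb, hc, hd]; ring]
    exact mul_ne_zero (mul_ne_zero hrho hmu0'.ne') hmu1'.ne'
  have hb0 : 0 < b := hb ▸ mul_pos hp hmu0'
  have hlt : a + b < c + d := by linarith [mul_pos hq hmu1']
  have hD : 0 < (a - d) ^ 2 + 4 * b * c := mobius_discrim_pos hb0 hlt
  set s := √((a - d) ^ 2 + 4 * b * c)
  have hs : 0 < s := Real.sqrt_pos.2 hD
  have hsq : s ^ 2 = (a - d) ^ 2 + 4 * b * c := Real.sq_sqrt hD.le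
  have hfix {t : ℝ} (ht : t ^ 2 = (a - d) ^ 2 + 4 * b * c) :
      tauF p q mu0 mu1 ((a - d + t) / (2 * c)) = (a - d + t) / (2 * c) := by
    rw [tauF_eq_mobius, ← ha, ← hb, ← hc, ← hd]
    exact mobius_eq_self_of_sq_eq hc0 hdet ht
  have hne : (a - d + s) / (2 * c) ≠ (a - d + -s) / (2 * c) := by
    rw [Ne, div_left_inj' (mul_ne_zero two_ne_zero hc0)]
    linarith
  exact ⟨hc0, hD, ⟨_, _, hne, hfix hsq, hfix ((neg_sq s).trans hsq)⟩, hfix hsq,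
    mobius_root_mem_Ioo_zero_one hc0 hb0 hlt hs hsq⟩

/-- For `p, q ∈ (0,1)`, `μ₀ ≠ μ₁ ∈ (0,1)` and `ρ = 1−p−q ≠ 0`, the equation `τ_f(ω) = ω`
has two distinct real solutions (equivalently `(a−d)² + 4bc > 0` and `c ≠ 0`), and the
solution `ω* = (a − d + √((a−d)² + 4bc))/(2c)` lies in `(0,1)`. -/
theorem tauF_fixed_points
    (p q mu0 mu1 : ℝ)
    (hp : p ∈ Set.Ioo (0 : ℝ) 1) (hq : q ∈ Set.Ioo (0 : ℝ) 1)
    (hmu0 : mu0 ∈ Set.Ioo (0 : ℝ) 1) (hmu1 : mu1 ∈ Set.Ioo (0 : ℝ) 1)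
    (hmu : mu0 ≠ mu1) (hrho : 1 - p - q ≠ 0)
    (a b c d : ℝ)
    (ha : a = (1 - q) * (1 - mu1) - p * (1 - mu0))
    (hb : b = p * (1 - mu0))
    (hc : c = (1 - mu1) - (1 - mu0))
    (hd : d = 1 - mu0) :
    c ≠ 0 ∧ 0 < (a - d) ^ 2 + 4 * b * c ∧
    (∃ ω₁ ω₂ : ℝ, ω₁ ≠ ω₂ ∧ tauF p q mu0 mu1 ω₁ = ω₁ ∧ tauF p q mu0 mu1 ω₂ = ω₂) ∧
    tauF p q mu0 mu1 ((a - d + Real.sqrt ((a - d) ^ 2 + 4 * b * c)) / (2 * c))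
      = (a - d + Real.sqrt ((a - d) ^ 2 + 4 * b * c)) / (2 * c) ∧
    (a - d + Real.sqrt ((a - d) ^ 2 + 4 * b * c)) / (2 * c) ∈ Set.Ioo (0 : ℝ) 1 :=
  tauF_fixed_points_general hp.1 hq.1 hmu0.2 hmu1.2 hmu hrho ha hb hc hd
end

section
/- Let γ₁, γ₂ ∈ [0,1] and μ₀⁽¹⁾, μ₁⁽¹⁾, μ₀⁽²⁾, μ₁⁽²⁾ ∈ [0,1] satisfy μ₀⁽²⁾ ≤ μ₀⁽¹⁾ < μ₁⁽¹⁾ ≤ μ₁⁽²⁾. Then (1−γ₁)(1−γ₂)μ₀⁽¹⁾ + γ₂μ₁⁽²⁾ + γ₁(1−γ₂)μ₁⁽¹⁾ ≥ max( (1−γ₁)μ₀⁽¹⁾ + γ₁μ₁⁽¹⁾ , (1−γ₂)μ₀⁽²⁾ + γ₂μ₁⁽²⁾ ), i.e. the full-observation stability bound μ*_full is at least the no-observation stability bound μ*_no. -/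
/-!
If server 1 succeeds with mean probability `m`, then `μ*_full = (1 - γ₂) m + γ₂ μ₁⁽²⁾`: a scheduler
observing the states uses server 2 exactly when it is in state 1. Since `μ₀⁽²⁾ ≤ m ≤ μ₁⁽²⁾`,
replacing `μ₁⁽²⁾` by `m` in this average lowers it to `m`, and replacing `m` by `μ₀⁽²⁾` lowers it to
the mean success probability of server 2.
-/

open AffineMap Set

theorem sup_lineMap_le_lineMap {k E : Type*} [Ring k] [PartialOrder k] [IsOrderedRing k]
    [AddCommGroup E] [Lattice E] [IsOrderedAddMonoid E] [Module k E] [IsStrictOrderedModule k E]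
    {a b m : E} {t : k} (hm : m ∈ Icc a b) (ht : t ∈ Icc 0 1) :
    m ⊔ lineMap a b t ≤ lineMap m b t := by
  apply sup_le
  · calc
      m = lineMap m m t := (lineMap_same_apply m t).symm
      _ ≤ lineMap m b t := lineMap_mono_right hm.2 ht.1
  · exact lineMap_mono_left hm.1 ht.2

theorem full_ge_no_observation_general {R : Type*} [CommRing R] [LinearOrder R]
    [IsStrictOrderedRing R] {γ1 γ2 mu01 mu11 mu02 mu12 : R}
    (hγ1 : γ1 ∈ Icc 0 1) (hγ2 : γ2 ∈ Icc 0 1)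
    (hmu01 : mu01 ∈ Icc mu02 mu12) (hmu11 : mu11 ∈ Icc mu02 mu12) :
    max ((1 - γ1) * mu01 + γ1 * mu11) ((1 - γ2) * mu02 + γ2 * mu12)
      ≤ (1 - γ1) * (1 - γ2) * mu01 + γ2 * mu12 + γ1 * (1 - γ2) * mu11 := by
  have hmean : lineMap mu01 mu11 γ1 ∈ Icc mu02 mu12 :=
    (convex_Icc mu02 mu12).lineMap_mem hmu01 hmu11 hγ1
  calc
    _ = max (lineMap mu01 mu11 γ1) (lineMap mu02 mu12 γ2) := by simp only [lineMap_apply_ring]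
    _ ≤ lineMap (lineMap mu01 mu11 γ1) mu12 γ2 := sup_lineMap_le_lineMap hmean hγ2
    _ = _ := by simp only [lineMap_apply_ring]; ring

/-- Under the ordering `μ₀⁽²⁾ ≤ μ₀⁽¹⁾ < μ₁⁽¹⁾ ≤ μ₁⁽²⁾`, the full-observation stability
bound `μ*_full = (1−γ₁)(1−γ₂)μ₀⁽¹⁾ + γ₂μ₁⁽²⁾ + γ₁(1−γ₂)μ₁⁽¹⁾` dominates the
no-observation stability bound `μ*_no = max_j((1−γⱼ)μ₀⁽ʲ⁾ + γⱼμ₁⁽ʲ⁾)`. -/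
theorem full_ge_no_observation
    (γ1 γ2 mu01 mu11 mu02 mu12 : ℝ)
    (hγ1 : γ1 ∈ Set.Icc (0 : ℝ) 1) (hγ2 : γ2 ∈ Set.Icc (0 : ℝ) 1)
    (hmu01 : mu01 ∈ Set.Icc (0 : ℝ) 1) (hmu11 : mu11 ∈ Set.Icc (0 : ℝ) 1)
    (hmu02 : mu02 ∈ Set.Icc (0 : ℝ) 1) (hmu12 : mu12 ∈ Set.Icc (0 : ℝ) 1)
    (h1 : mu02 ≤ mu01) (h2 : mu01 < mu11) (h3 : mu11 ≤ mu12) :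
    max ((1 - γ1) * mu01 + γ1 * mu11) ((1 - γ2) * mu02 + γ2 * mu12)
      ≤ (1 - γ1) * (1 - γ2) * mu01 + γ2 * mu12 + γ1 * (1 - γ2) * mu11 :=
  full_ge_no_observation_general hγ1 hγ2 ⟨h1, h2.le.trans h3⟩ ⟨h1.trans h2.le, h3⟩
end
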